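/- arXiv:2101.01005 — 2 statements merged into one kernel-verified Lean document; each statement's English description precedes it below -/
import Mathlib

section
/- Let Ω be a set and S a set of functions σ : Ω → ℝ × ℝ such that every σ ∈ S satisfies (σ x).1 ≥ (σ x).2 for all x ∈ Ω. Fix a ≥ 0 and c′ ∈ ℝ, and let q₁, q₂ : (0, ∞) → [0, ∞) satisfy q₁(λ) ≤ q₂(λ) for all λ > 0. For a reduction function q, call λ > 0 admissible if there exists σ ∈ S with Φ(q(λ); (σ x).1, (σ x).2) ≤ 0 for all x ∈ Ω, and let ω*(q) be the supremum of the admissible set. Then every λ admissible for q₂ is admissible for q₁; consequently, if the admissible set of q₁ is nonempty and bounded above, then ω*(q₂) ≤ ω*(q₁). In particular, since q_A, q_B, q_C ≥ q_ass pointwise (with q_ass(λ) = λ), the Davis A–C safety factors satisfy λ*_A ≤ λ*_ass, λ*_B ≤ λ*_ass, λ*_C ≤ λ*_ass. -/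
/-!
`Φ` is nondecreasing in its first argument on `[0, ∞)` as soon as `s₃ ≤ s₁`, so a stress field that
is feasible for a larger reduction function is feasible for a smaller one (`adm_subset`), and the
suprema compare accordingly (`sSup_adm_le`). The Davis functions dominate the identity because of
the Cauchy–Schwarz inequality in the plane, `x * y + a * b ≤ √((x² + a²)(y² + b²))`
(`cauchy_sqrt`), used with `(x, y) = (1, 1)` for A, `(λ, λ)` for B and `(λ, 1)` for C.
-/

/-- The Mohr–Coulomb function `Φ(λ; s₁, s₃) = (s₁ − s₃)·√(λ² + a²) + (s₁ + s₃)·a − 2c′`. -/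
noncomputable def Phi (a c' lam s1 s3 : ℝ) : ℝ :=
  (s1 - s3) * Real.sqrt (lam ^ 2 + a ^ 2) + (s1 + s3) * a - 2 * c'

/-- The set of admissible reduction parameters for the OPT-SSR problem with
reduction function `q`: those `λ > 0` for which some statically admissible stress
field `σ ∈ S` satisfies the pointwise constraint `Φ(q(λ); ·, ·) ≤ 0` on `Ω`. -/
def Adm {Ω : Type*} (S : Set (Ω → ℝ × ℝ)) (a c' : ℝ) (q : ℝ → ℝ) : Set ℝ :=
  {lam : ℝ | 0 < lam ∧ ∃ σ ∈ S, ∀ x : Ω, Phi a c' (q lam) (σ x).1 (σ x).2 ≤ 0}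

/-- The Davis A reduction function `q_A(λ) = λ·(√((1 + a²)(1 + b²)) − a·b)`. -/
noncomputable def qA (a b lam : ℝ) : ℝ :=
  lam * (Real.sqrt ((1 + a ^ 2) * (1 + b ^ 2)) - a * b)

/-- The Davis B reduction function `q_B(λ) = (1/λ)·(√((λ² + a²)(λ² + b²)) − a·b)`. -/
noncomputable def qB (a b lam : ℝ) : ℝ :=
  (1 / lam) * (Real.sqrt ((lam ^ 2 + a ^ 2) * (lam ^ 2 + b ^ 2)) - a * b)

/-- The Davis C reduction function:
`q_C(λ) = √((λ² + a²)(1 + b²)) − a·b` if `a ≥ λ·b`, and `q_C(λ) = λ` if `a ≤ λ·b`. -/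
noncomputable def qC (a b lam : ℝ) : ℝ :=
  if lam * b ≤ a then Real.sqrt ((lam ^ 2 + a ^ 2) * (1 + b ^ 2)) - a * b else lam

lemma adm_subset {Ω : Type*} {S : Set (Ω → ℝ × ℝ)}
    (hS : ∀ σ ∈ S, ∀ x : Ω, (σ x).2 ≤ (σ x).1) (a c' : ℝ) {p q : ℝ → ℝ}
    (hp : ∀ lam : ℝ, 0 < lam → 0 ≤ p lam) (hle : ∀ lam : ℝ, 0 < lam → p lam ≤ q lam) :
    Adm S a c' q ⊆ Adm S a c' p := by
  rintro lam ⟨hlam, σ, hσ, h⟩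
  refine ⟨hlam, σ, hσ, fun x => le_trans ?_ (h x)⟩
  have hd : 0 ≤ (σ x).1 - (σ x).2 := sub_nonneg.2 (hS σ hσ x)
  have hp0 := hp lam hlam
  have hpq := hle lam hlam
  unfold Phi
  gcongr

/-- Nonemptiness of the smaller set is not needed: admissible parameters are positive, and the
supremum of the empty set of reals is `0`. -/
lemma sSup_adm_le {Ω : Type*} {S : Set (Ω → ℝ × ℝ)} {a c' : ℝ} {p q : ℝ → ℝ}
    (hsub : Adm S a c' q ⊆ Adm S a c' p) (hbdd : BddAbove (Adm S a c' p)) :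
    sSup (Adm S a c' q) ≤ sSup (Adm S a c' p) :=
  Real.sSup_le (fun _ h => le_csSup hbdd (hsub h)) (Real.sSup_nonneg fun _ h => h.1.le)

lemma cauchy_sqrt (x y a b : ℝ) :
    x * y + a * b ≤ Real.sqrt ((x ^ 2 + a ^ 2) * (y ^ 2 + b ^ 2)) :=
  Real.le_sqrt_of_sq_le (by nlinarith [sq_nonneg (x * b - a * y)])

lemma le_qA (a b : ℝ) {lam : ℝ} (h : 0 < lam) : lam ≤ qA a b lam := by
  have hc := cauchy_sqrt 1 1 a b
  simp only [one_pow, mul_one] at hc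
  exact le_mul_of_one_le_right h.le (by linarith)

lemma le_qB (a b : ℝ) {lam : ℝ} (h : 0 < lam) : lam ≤ qB a b lam := by
  have hc := cauchy_sqrt lam lam a b
  rw [qB, one_div_mul_eq_div, le_div_iff₀ h]
  linarith

lemma le_qC (a b lam : ℝ) : lam ≤ qC a b lam := by
  have hc := cauchy_sqrt lam 1 a b
  simp only [one_pow, mul_one] at hc
  unfold qC
  split_ifs
  · linarith
  · exact le_rfl

theorem stmt_15 {Ω : Type*} (S : Set (Ω → ℝ × ℝ))
    (hS : ∀ σ ∈ S, ∀ x : Ω, (σ x).2 ≤ (σ x).1)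
    (a b c' : ℝ) (ha : 0 ≤ a) (hb : 0 ≤ b) (hba : b ≤ a)
    (q₁ q₂ : ℝ → ℝ)
    (hq₁ : ∀ lam : ℝ, 0 < lam → 0 ≤ q₁ lam)
    (hq₂ : ∀ lam : ℝ, 0 < lam → 0 ≤ q₂ lam)
    (hle : ∀ lam : ℝ, 0 < lam → q₁ lam ≤ q₂ lam) :
    (Adm S a c' q₂ ⊆ Adm S a c' q₁) ∧
    ((Adm S a c' q₁).Nonempty → BddAbove (Adm S a c' q₁) →
      sSup (Adm S a c' q₂) ≤ sSup (Adm S a c' q₁)) ∧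
    ((Adm S a c' (fun lam => lam)).Nonempty → BddAbove (Adm S a c' (fun lam => lam)) →
      sSup (Adm S a c' (qA a b)) ≤ sSup (Adm S a c' (fun lam => lam)) ∧
      sSup (Adm S a c' (qB a b)) ≤ sSup (Adm S a c' (fun lam => lam)) ∧
      sSup (Adm S a c' (qC a b)) ≤ sSup (Adm S a c' (fun lam => lam))) := by
  have key {q : ℝ → ℝ} (hq : ∀ lam : ℝ, 0 < lam → lam ≤ q lam) :
      Adm S a c' q ⊆ Adm S a c' (fun lam => lam) :=
    adm_subset hS a c' (fun _ h => h.le) hq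
  have hsub := adm_subset hS a c' hq₁ hle
  exact ⟨hsub, fun _ hbdd => sSup_adm_le hsub hbdd, fun _ hbdd =>
    ⟨sSup_adm_le (key fun _ h => le_qA a b h) hbdd,
      sSup_adm_le (key fun _ h => le_qB a b h) hbdd,
      sSup_adm_le (key fun lam _ => le_qC a b lam) hbdd⟩⟩
end

section
/- Let H be a real normed space and K : [0, ∞) → Set H an antitone family of subsets (λ ≤ μ implies K(μ) ⊆ K(λ)). Assume A := { λ ≥ 0 : K(λ) is nonempty } is nonempty and bounded above, and let ω* := sup A. For α > 0 define G_α(λ) := (1/(2α)) · inf { ‖σ‖² : σ ∈ K(λ) } for λ ∈ A and ω*_α := sup { λ − G_α(λ) : λ ∈ A }. Suppose that for each α > 0 there exists a maximizer λ*_α ∈ A, i.e. ω*_α = λ*_α − G_α(λ*_α). Then ω*_α ≤ λ*_α ≤ ω* for every α > 0, and λ*_α → ω* as α → +∞. -/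
/-! Since `G_α ≥ 0`, the maximum value satisfies `ω*_α ≤ λ*_α`, and `λ*_α ∈ A` gives `λ*_α ≤ ω*`.
For the limit, fix `a < ω*` and choose `μ ∈ A` with `a < μ`. Maximality gives
`λ*_α ≥ ω*_α ≥ μ - G_α(μ)`, and `G_α(μ)` is a constant divided by `2α`, so the right-hand side
tends to `μ` and eventually exceeds `a`. -/

/-- The admissible set `A = { λ ≥ 0 : K(λ) ≠ ∅ }`. -/
def admSet {H : Type*} (K : ℝ → Set H) : Set ℝ :=
  {lam : ℝ | 0 ≤ lam ∧ (K lam).Nonempty}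

/-- The regularization term `G_α(λ) = (1/(2α)) · inf { ‖σ‖² : σ ∈ K(λ) }`. -/
noncomputable def regG {H : Type*} [NormedAddCommGroup H] (K : ℝ → Set H)
    (α lam : ℝ) : ℝ :=
  (1 / (2 * α)) * sInf ((fun σ => ‖σ‖ ^ 2) '' K lam)

/-- The regularized safety factor `ω*_α = sup { λ − G_α(λ) : λ ∈ A }`. -/
noncomputable def omegaAlpha {H : Type*} [NormedAddCommGroup H] (K : ℝ → Set H)
    (α : ℝ) : ℝ :=
  sSup ((fun lam => lam - regG K α lam) '' admSet K)

theorem regG_nonneg {H : Type*} [NormedAddCommGroup H] (K : ℝ → Set H)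
    {α : ℝ} (hα : 0 < α) (lam : ℝ) : 0 ≤ regG K α lam := by
  have h : 0 ≤ sInf ((fun σ : H => ‖σ‖ ^ 2) '' K lam) := by
    apply Real.sInf_nonneg
    rintro _ ⟨σ, -, rfl⟩
    positivity
  unfold regG
  positivity

/-- The set whose supremum defines `omegaAlpha` is bounded above, so that supremum is not a junk
value and dominates each `lam - regG K α lam`. -/
theorem sub_regG_le_omegaAlpha {H : Type*} [NormedAddCommGroup H] (K : ℝ → Set H)
    (hbdd : BddAbove (admSet K)) {α : ℝ} (hα : 0 < α) {lam : ℝ} (hlam : lam ∈ admSet K) :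
    lam - regG K α lam ≤ omegaAlpha K α := by
  refine le_csSup ?_ ⟨lam, hlam, rfl⟩
  obtain ⟨b, hb⟩ := hbdd
  refine ⟨b, ?_⟩
  rintro _ ⟨mu, hmu, rfl⟩
  exact (sub_le_self _ (regG_nonneg K hα mu)).trans (hb hmu)

theorem tendsto_regG {H : Type*} [NormedAddCommGroup H] (K : ℝ → Set H) (lam : ℝ) :
    Filter.Tendsto (fun α => regG K α lam) Filter.atTop (nhds 0) := by
  have h : Filter.Tendsto (fun α : ℝ => 1 / (2 * α)) Filter.atTop (nhds 0) :=
    (Filter.tendsto_id.const_mul_atTop two_pos).const_div_atTop 1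
  simpa [regG] using h.mul_const (sInf ((fun σ : H => ‖σ‖ ^ 2) '' K lam))

theorem stmt_19 {H : Type*} [NormedAddCommGroup H] [NormedSpace ℝ H]
    (K : ℝ → Set H)
    (hK : ∀ lam mu : ℝ, 0 ≤ lam → lam ≤ mu → K mu ⊆ K lam)
    (hA : (admSet K).Nonempty) (hbdd : BddAbove (admSet K))
    (lamStar : ℝ → ℝ)
    (hmax : ∀ α : ℝ, 0 < α → lamStar α ∈ admSet K ∧
      omegaAlpha K α = lamStar α - regG K α (lamStar α)) :
    (∀ α : ℝ, 0 < α →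
      omegaAlpha K α ≤ lamStar α ∧ lamStar α ≤ sSup (admSet K)) ∧
    Filter.Tendsto lamStar Filter.atTop (nhds (sSup (admSet K))) := by
  have hbounds : ∀ α : ℝ, 0 < α →
      omegaAlpha K α ≤ lamStar α ∧ lamStar α ≤ sSup (admSet K) := by
    intro α hα
    obtain ⟨hmem, heq⟩ := hmax α hα
    exact ⟨heq.trans_le (sub_le_self _ (regG_nonneg K hα _)), le_csSup hbdd hmem⟩
  refine ⟨hbounds, tendsto_order.2 ⟨fun a ha => ?_, fun a ha => ?_⟩⟩
  · obtain ⟨mu, hmu, hamu⟩ := exists_lt_of_lt_csSup hA ha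
    have hlim : Filter.Tendsto (fun α => mu - regG K α mu) Filter.atTop (nhds mu) := by
      simpa using (tendsto_regG K mu).const_sub mu
    filter_upwards [hlim.eventually_const_lt hamu, Filter.eventually_gt_atTop 0] with α h1 hα
    exact h1.trans_le ((sub_regG_le_omegaAlpha K hbdd hα hmu).trans (hbounds α hα).1)
  · filter_upwards [Filter.eventually_gt_atTop 0] with α hα
    exact (hbounds α hα).2.trans_lt ha
end
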